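/- Let n ≥ 2 and let F(Y,X₁,…,Xₙ) ∈ ℤ[Y,X₁,…,Xₙ] be absolutely irreducible (irreducible in ℚ̄[Y,X₁,…,Xₙ]) with deg_Y F ≥ 2 and ‖F‖ ≥ 3. Suppose that every element of L_F := ℚ(X₁,…,Xₙ)[Y]/(F) that is algebraic over the subfield ℚ(X₂,…,Xₙ) already lies in ℚ(X₂,…,Xₙ). Then there exists a finite set E of primes with |E| ≤ C(n,deg F) · log‖F‖ / log log‖F‖, for a constant C(n,deg F) depending only on n and deg F, such that for every prime p ∉ E: #{(x₂,…,xₙ) ∈ 𝔽_p^{n−1} : F(Y,X₁,x₂,…,xₙ) is not irreducible as an element of 𝔽̄_p[Y,X₁]} ≤ C′(n,deg F) · p^{n−2}. -/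

import Mathlib

open Polynomial

noncomputable section

/-- The rational function field `ℚ(X₁,…,Xₙ)`. -/
abbrev RF (n : ℕ) := FractionRing (MvPolynomial (Fin n) ℚ)

/-- Base change a polynomial `F ∈ ℤ[Y,X₁,…,Xₙ]` (written as a polynomial in `Y`
with coefficients in `ℤ[X₁,…,Xₙ]`) to `ℚ[Y,X₁,…,Xₙ]`. -/
def toQ {n : ℕ} (F : Polynomial (MvPolynomial (Fin n) ℤ)) :
    Polynomial (MvPolynomial (Fin n) ℚ) :=
  F.map (MvPolynomial.map (Int.castRingHom ℚ))

/-- View a polynomial in `ℚ[X][Y]` as a polynomial in `ℚ(X)[Y]`. -/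
def toFracQ {n : ℕ} (F : Polynomial (MvPolynomial (Fin n) ℚ)) : Polynomial (RF n) :=
  F.map (algebraMap (MvPolynomial (Fin n) ℚ) (RF n))

/-- View a polynomial in `ℤ[X][Y]` as a polynomial in `ℚ(X)[Y]`. -/
def toFrac {n : ℕ} (F : Polynomial (MvPolynomial (Fin n) ℤ)) : Polynomial (RF n) :=
  toFracQ (toQ F)

/-- The degree of `F(Y,X)` in the variable `Xᵢ`. -/
def degX {n : ℕ} {R : Type*} [CommSemiring R]
    (F : Polynomial (MvPolynomial (Fin n) R)) (i : Fin n) : ℕ :=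
  F.support.sup fun k => (F.coeff k).degreeOf i

/-- The total degree of `F(Y,X₁,…,Xₙ)` as a polynomial in `n+1` variables. -/
def totalDeg {n : ℕ} {R : Type*} [CommSemiring R]
    (F : Polynomial (MvPolynomial (Fin n) R)) : ℕ :=
  F.support.sup fun k => k + (F.coeff k).totalDegree

/-- `‖g‖`: the maximum absolute value of a coefficient of `g ∈ ℤ[X₁,…,Xₙ]`. -/
def mvNorm {n : ℕ} (g : MvPolynomial (Fin n) ℤ) : ℕ :=
  g.support.sup fun m => (g.coeff m).natAbs

/-- `‖F‖`: the maximum absolute value of a coefficient of `F ∈ ℤ[Y,X₁,…,Xₙ]`. -/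
def polyNorm {n : ℕ} (F : Polynomial (MvPolynomial (Fin n) ℤ)) : ℕ :=
  F.support.sup fun k => mvNorm (F.coeff k)

/-- The counting function
`N(F,B) = #{x ∈ ℤⁿ ∩ [−B,B]ⁿ : ∃ y ∈ ℤ, F(y,x) = 0}`. -/
def NFB {n : ℕ} (F : Polynomial (MvPolynomial (Fin n) ℤ)) (B : ℝ) : ℕ :=
  Set.ncard {x : Fin n → ℤ | (∀ i, |(x i : ℝ)| ≤ B) ∧
    ∃ y : ℤ, Polynomial.eval y (F.map (MvPolynomial.eval x)) = 0}

/-- `F ∈ ℤ[Y,X₁,…,Xₙ]` is absolutely irreducible: irreducible over `ℚ̄`. -/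
def AbsIrred {n : ℕ} (F : Polynomial (MvPolynomial (Fin n) ℤ)) : Prop :=
  Irreducible (F.map (MvPolynomial.map (Int.castRingHom (AlgebraicClosure ℚ))))

/-- `G` has positive degree in `Y` and in each variable `Xᵢ`. -/
def AllPosDeg {n : ℕ} (G : Polynomial (MvPolynomial (Fin n) ℤ)) : Prop :=
  0 < G.natDegree ∧ ∀ i : Fin n, 0 < degX G i

/-- A field extension `M` of `ℚ(X₁,…,Xₙ)` is an `n`-genuine extension: every
`G ∈ ℤ[Y,X₁,…,Xₙ]` irreducible over `ℚ(X)` with `M ≅ ℚ(X)[Y]/(G)` has positive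
degree in each of `Y, X₁, …, Xₙ`. -/
def IsGenuineExt (n : ℕ) (M : Type*) [Field M] [Algebra (RF n) M] : Prop :=
  ∀ G : Polynomial (MvPolynomial (Fin n) ℤ), Irreducible (toFrac G) →
    Nonempty (AdjoinRoot (toFrac G) ≃ₐ[RF n] M) → AllPosDeg G

/-- A field extension `M` of `ℚ(X₁,…,Xₙ)` is strongly `n`-genuine: every
intermediate field strictly containing `ℚ(X)` is `n`-genuine. -/
def IsStronglyGenuineExt (n : ℕ) (M : Type*) [Field M] [Algebra (RF n) M] : Prop :=
  ∀ M' : IntermediateField (RF n) M, M' ≠ ⊥ → IsGenuineExt n M'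

/-- The extension `ℚ(X)[Y]/(Fq)` presented by `Fq ∈ ℚ[X][Y]` is `n`-genuine. -/
def GenuineExtOfQ {n : ℕ} (Fq : Polynomial (MvPolynomial (Fin n) ℚ)) : Prop :=
  ∀ G : Polynomial (MvPolynomial (Fin n) ℤ), Irreducible (toFrac G) →
    Nonempty (AdjoinRoot (toFrac G) ≃ₐ[RF n] AdjoinRoot (toFracQ Fq)) → AllPosDeg G

/-- The extension `ℚ(X)[Y]/(Fq)` presented by `Fq ∈ ℚ[X][Y]` is strongly
`n`-genuine: for any field `M` isomorphic over `ℚ(X)` to `ℚ(X)[Y]/(Fq)`, every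
intermediate field strictly containing `ℚ(X)` is `n`-genuine. -/
def StronglyGenuineExtOfQ {n : ℕ} (Fq : Polynomial (MvPolynomial (Fin n) ℚ)) : Prop :=
  ∀ (M : Type) [Field M] [Algebra (RF n) M],
    Nonempty (AdjoinRoot (toFracQ Fq) ≃ₐ[RF n] M) → IsStronglyGenuineExt n M

/-- An absolutely irreducible `F ∈ ℤ[Y,X₁,…,Xₙ]` is an `n`-genuine polynomial. -/
def IsGenuinePoly {n : ℕ} (F : Polynomial (MvPolynomial (Fin n) ℤ)) : Prop :=
  AbsIrred F ∧ GenuineExtOfQ (toQ F)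

/-- An absolutely irreducible `F ∈ ℤ[Y,X₁,…,Xₙ]` is a strongly `n`-genuine polynomial. -/
def IsStronglyGenuinePoly {n : ℕ} (F : Polynomial (MvPolynomial (Fin n) ℤ)) : Prop :=
  AbsIrred F ∧ StronglyGenuineExtOfQ (toQ F)

/-- The ring map `ℚ[X₁,…,Xₙ] → ℚ[X₁,…,Xₙ]` induced by the linear substitution
`Xᵢ ↦ Σⱼ σᵢⱼ Xⱼ`. -/
def lsubMv {n : ℕ} (σ : Matrix (Fin n) (Fin n) ℚ) :
    MvPolynomial (Fin n) ℚ →+* MvPolynomial (Fin n) ℚ :=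
  (MvPolynomial.aeval (R := ℚ)
    fun i => ∑ j, MvPolynomial.C (σ i j) * MvPolynomial.X j).toRingHom

/-- `F_σ(Y,X) := F(Y,σ(X))` for a linear change of variables `σ`. -/
def applyGL {n : ℕ} (σ : Matrix (Fin n) (Fin n) ℚ)
    (Fq : Polynomial (MvPolynomial (Fin n) ℚ)) : Polynomial (MvPolynomial (Fin n) ℚ) :=
  Fq.map (lsubMv σ)

/-- `F` is `(1,n)`-allowable: absolutely irreducible, monic in `Y`, and
`ℚ(X)[Y]/(F_σ)` is an `n`-genuine extension for every `σ ∈ GLₙ(ℚ)`. -/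
def IsAllowable {n : ℕ} (F : Polynomial (MvPolynomial (Fin n) ℤ)) : Prop :=
  AbsIrred F ∧ F.Monic ∧
    ∀ σ : Matrix (Fin n) (Fin n) ℚ, IsUnit σ.det → GenuineExtOfQ (applyGL σ (toQ F))

/-- `F` is strongly `(1,n)`-allowable: absolutely irreducible, monic in `Y`, and
`ℚ(X)[Y]/(F_σ)` is a strongly `n`-genuine extension for every `σ ∈ GLₙ(ℚ)`. -/
def IsStronglyAllowable {n : ℕ} (F : Polynomial (MvPolynomial (Fin n) ℤ)) : Prop :=
  AbsIrred F ∧ F.Monic ∧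
    ∀ σ : Matrix (Fin n) (Fin n) ℚ, IsUnit σ.det → StronglyGenuineExtOfQ (applyGL σ (toQ F))

/-- `F` has the form (1.2) with parameter `m`:
`F = Y^{md} + f₁(X) Y^{m(d-1)} + ⋯ + f_{d-1}(X) Y^m + f_d(X)` with `f_d ≠ 0`. -/
def HasForm (n m : ℕ) (F : Polynomial (MvPolynomial (Fin n) ℤ)) : Prop :=
  ∃ (d : ℕ) (f : ℕ → MvPolynomial (Fin n) ℤ), 1 ≤ d ∧ f d ≠ 0 ∧
    F = Polynomial.X ^ (m * d) +
      ∑ j ∈ Finset.Icc 1 d, Polynomial.C (f j) * Polynomial.X ^ (m * (d - j))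

/-- `P` has a linear factor in `Y`: `P = (Y − Q(X))·H̃(Y,X)`. -/
def HasLinearFactorY {n : ℕ} {R : Type*} [CommRing R]
    (P : Polynomial (MvPolynomial (Fin n) R)) : Prop :=
  ∃ (Q : MvPolynomial (Fin n) R) (H : Polynomial (MvPolynomial (Fin n) R)),
    P = (Polynomial.X - Polynomial.C Q) * H

/-- The canonical map `ℚ[X₁,…,Xₙ] → ℚ(X)[Y]/(F)`. -/
def structMap {n : ℕ} (F : Polynomial (MvPolynomial (Fin n) ℤ)) :
    MvPolynomial (Fin n) ℚ →+* AdjoinRoot (toFrac F) :=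
  (algebraMap (RF n) (AdjoinRoot (toFrac F))).comp
    (algebraMap (MvPolynomial (Fin n) ℚ) (RF n))

/-- `z ∈ ℚ(X)[Y]/(F)` lies in the subfield `ℚ((Xᵢ)_{i≠j})`: it can be written
as a quotient of two polynomials not involving `Xⱼ`. -/
def CoordMem {n : ℕ} (j : Fin n) (F : Polynomial (MvPolynomial (Fin n) ℤ))
    (z : AdjoinRoot (toFrac F)) : Prop :=
  ∃ a b : MvPolynomial (Fin n) ℚ,
    MvPolynomial.degreeOf j a = 0 ∧ MvPolynomial.degreeOf j b = 0 ∧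
    structMap F b ≠ 0 ∧ z * structMap F b = structMap F a

/-- `z ∈ ℚ(X)[Y]/(F)` is algebraic over the subfield `ℚ((Xᵢ)_{i≠j})`. -/
def AlgOverCoord {n : ℕ} (j : Fin n) (F : Polynomial (MvPolynomial (Fin n) ℤ))
    (z : AdjoinRoot (toFrac F)) : Prop :=
  ∃ P : Polynomial (AdjoinRoot (toFrac F)), P ≠ 0 ∧ (∀ k, CoordMem j F (P.coeff k)) ∧
    Polynomial.eval z P = 0

/-- Substitute `Xᵢ = xᵢ` for `i ∈ I` into `F`, over `ℚ̄`. -/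
def substSome {n : ℕ} (I : Finset (Fin n)) (x : Fin n → ℚ)
    (F : Polynomial (MvPolynomial (Fin n) ℤ)) :
    Polynomial (MvPolynomial (Fin n) (AlgebraicClosure ℚ)) :=
  (toQ F).map
    ((MvPolynomial.aeval (R := ℚ) fun i =>
      if i ∈ I then MvPolynomial.C (algebraMap ℚ (AlgebraicClosure ℚ) (x i))
      else MvPolynomial.X i).toRingHom)

/-- Substitute `Xᵢ = xᵢ` for all `i ≠ i₀` into `F`, over `ℚ̄`. -/
def substKeepFirst {n : ℕ} (i0 : Fin n) (x : {i : Fin n // i ≠ i0} → ℤ)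
    (F : Polynomial (MvPolynomial (Fin n) ℤ)) :
    Polynomial (MvPolynomial (Fin n) (AlgebraicClosure ℚ)) :=
  F.map
    ((MvPolynomial.aeval (R := ℤ) fun i =>
      if h : i = i0 then (MvPolynomial.X i : MvPolynomial (Fin n) (AlgebraicClosure ℚ))
      else MvPolynomial.C ((x ⟨i, h⟩ : ℤ) : AlgebraicClosure ℚ)).toRingHom)

/-- `‖L‖`: maximum absolute value of an entry of an integer matrix. -/
def matNorm {n : ℕ} (L : Matrix (Fin n) (Fin n) ℤ) : ℕ :=
  Finset.univ.sup fun p : Fin n × Fin n => (L p.1 p.2).natAbs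

/-- The standard additive character `e_p(a) = exp(2πi a/p)` on `ZMod p`. -/
def eZp (p : ℕ) (a : ZMod p) : ℂ :=
  Complex.exp (2 * Real.pi * Complex.I * (a.val : ℂ) / (p : ℂ))

/-!
Regard `F` as a polynomial in `Y, Xⱼ` over `ℤ[Xᵢ : i ≠ j]`. The field `L = ℚ(X)[Y]/(F)` is generated
by `Y` and `Xⱼ` over `K = ℚ(Xᵢ : i ≠ j)`, and the hypothesis says that `K` is algebraically closed
in `L`. Since `K` is perfect, `L ⊗ K̄` is then a domain; hence `F` remains irreducible in
`K̄[Y, Xⱼ]`, that is, the generic member of the family is geometrically irreducible.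

Geometric irreducibility is a constructible condition. Applied to the polynomial of degree at most
`D` whose coefficients are independent variables, this gives finitely many polynomials `a` depending
only on `n` and `D` with the following property: for each admissible `F` one of them does not vanish
at the coefficients of `F`, becoming a nonzero `a_F ∈ ℤ[Xᵢ : i ≠ j]`, and every specialization
(modulo any `p`) at which `a_F` does not vanish is geometrically irreducible.

Some coefficient of `a_F` is a nonzero integer, bounded by a constant times a power of `‖F‖`; `E` is
the set of its prime factors, and there are `O(log ‖F‖ / log log ‖F‖)` of these. For `p ∉ E` the
reduction of `a_F` is nonzero, so by Schwartz–Zippel it has at most `deg a · p^(n-2)` zeros.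
-/

section Factorizations

variable {σ k l : Type*} [Field k] [Field l]

theorem totalDegree_ne_zero_iff_exists_coeff {R : Type*} [CommSemiring R] {p : MvPolynomial σ R} :
    p.totalDegree ≠ 0 ↔ ∃ m ≠ 0, p.coeff m ≠ 0 := by
  rw [Ne, MvPolynomial.totalDegree_eq_zero_iff]
  simp only [MvPolynomial.mem_support_iff, Finsupp.ne_iff, Finsupp.coe_zero, Pi.zero_apply]
  push Not
  exact exists_congr fun m ↦ and_comm

theorem totalDegree_map_le {R S : Type*} [CommSemiring R] [CommSemiring S] (φ : R →+* S)
    (p : MvPolynomial σ R) : (p.map φ).totalDegree ≤ p.totalDegree :=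
  Finset.sup_mono (MvPolynomial.support_map_subset φ p)

theorem totalDegree_map_of_injective {R S : Type*} [CommSemiring R] [CommSemiring S]
    {φ : R →+* S} (hφ : Function.Injective φ) (p : MvPolynomial σ R) :
    (p.map φ).totalDegree = p.totalDegree := by
  simp only [MvPolynomial.totalDegree, MvPolynomial.support_map_of_injective p hφ]

theorem isUnit_iff_totalDegree_eq_zero {p : MvPolynomial σ k} (hp : p ≠ 0) :
    IsUnit p ↔ p.totalDegree = 0 := by
  rw [MvPolynomial.isUnit_iff_totalDegree_of_isReduced, and_iff_right_iff_imp]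
  intro hdeg
  rw [MvPolynomial.totalDegree_eq_zero_iff_eq_C] at hdeg
  refine isUnit_iff_ne_zero.2 fun h0 ↦ hp ?_
  rw [hdeg, h0, map_zero]

theorem irreducible_iff_totalDegree {p : MvPolynomial σ k} :
    Irreducible p ↔ p.totalDegree ≠ 0 ∧
      ∀ g h, p = g * h → g.totalDegree = 0 ∨ h.totalDegree = 0 := by
  rcases eq_or_ne p 0 with rfl | hp
  · simp
  rw [irreducible_iff, isUnit_iff_totalDegree_eq_zero hp]
  refine and_congr_right fun _ ↦ forall₂_congr fun g h ↦ forall_congr' fun hgh ↦ ?_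
  rw [isUnit_iff_totalDegree_eq_zero (left_ne_zero_of_mul (hgh ▸ hp)),
    isUnit_iff_totalDegree_eq_zero (right_ne_zero_of_mul (hgh ▸ hp))]

theorem irreducible_of_irreducible_map (i : k →+* l) {p : MvPolynomial σ k}
    (hp : Irreducible (p.map i)) : Irreducible p := by
  rw [irreducible_iff_totalDegree] at hp ⊢
  simp only [totalDegree_map_of_injective i.injective] at hp
  refine ⟨hp.1, fun g h hgh ↦ ?_⟩
  simpa only [totalDegree_map_of_injective i.injective] using
    hp.2 (g.map i) (h.map i) (by rw [hgh, map_mul])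

theorem irreducible_rename {τ : Type*} {e : σ → τ} (he : Function.Injective e)
    {p : MvPolynomial σ k} (hp : Irreducible p) : Irreducible (MvPolynomial.rename e p) := by
  have hrange : Prime (MvPolynomial.renameEquiv k (Equiv.ofInjective e he) p) :=
    (MulEquiv.prime_iff _).2 hp.prime
  simpa [MvPolynomial.rename_rename, Function.comp_def] using
    ((MvPolynomial.prime_rename_iff (Set.range e)).2 hrange).irreducible

end Factorizations

/-- A polynomial over a field is geometrically irreducible if it is irreducible over an algebraic
closure. -/
def GeometricallyIrreducible {σ k : Type*} [Field k] (f : MvPolynomial σ k) : Prop :=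
  Irreducible (f.map (algebraMap k (AlgebraicClosure k)))

section Descent

variable {σ K : Type*} [Field K]

theorem exists_algHom_algebraicClosure_ne_zero {B : Type*} [CommRing B] [IsDomain B] [Algebra K B]
    [Algebra.FiniteType K B] {b : B} (hb : b ≠ 0) :
    ∃ ψ : B →ₐ[K] AlgebraicClosure K, ψ b ≠ 0 := by
  have : IsDomain (Localization.Away b) :=
    IsLocalization.isDomain_localization (powers_le_nonZeroDivisors_of_noZeroDivisors hb)
  have : Algebra.FiniteType K (Localization.Away b) := .trans (S := B) inferInstance inferInstance
  obtain ⟨m, hm⟩ := Ideal.exists_maximal (Localization.Away b)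
  let := Ideal.Quotient.field m
  have : Module.Finite K (Localization.Away b ⧸ m) := finite_of_finite_type_of_isJacobsonRing K _
  let χ : Localization.Away b →ₐ[K] AlgebraicClosure K :=
    IsAlgClosed.lift.comp (Ideal.Quotient.mkₐ K m)
  exact ⟨χ.comp (IsScalarTower.toAlgHom K B _),
    ((IsLocalization.Away.algebraMap_isUnit b).map χ).ne_zero⟩

/-- By the Nullstellensatz, the finitely many coefficients of a factorization over `Ω` specialize to
`AlgebraicClosure K` without making both factors constant. -/
theorem GeometricallyIrreducible.irreducible_map {f : MvPolynomial σ K}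
    (hf : GeometricallyIrreducible f) {Ω : Type*} [Field Ω] (i : K →+* Ω) :
    Irreducible (f.map i) := by
  let := i.toAlgebra
  obtain ⟨hdeg, hfac⟩ := irreducible_iff_totalDegree.1 hf
  rw [totalDegree_map_of_injective (algebraMap K _).injective] at hdeg
  rw [irreducible_iff_totalDegree, totalDegree_map_of_injective i.injective]
  refine ⟨hdeg, fun g h hgh ↦ ?_⟩
  by_contra! hdegs
  let s : Set Ω := g.coeffs ∪ h.coeffs
  let B := Algebra.adjoin K s
  have hsB : s ⊆ Set.range (algebraMap B Ω) := by
    rw [Subalgebra.setRange_algebraMap]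
    exact Algebra.subset_adjoin
  have : Algebra.FiniteType K B := .adjoin_of_finite (Set.toFinite s)
  obtain ⟨g₀, hg₀⟩ := MvPolynomial.mem_range_map_iff_coeffs_subset.2
    (Set.subset_union_left.trans hsB)
  obtain ⟨h₀, hh₀⟩ := MvPolynomial.mem_range_map_iff_coeffs_subset.2
    (Set.subset_union_right.trans hsB)
  have hinj : Function.Injective (algebraMap B Ω) := Subtype.val_injective
  have hgh₀ : f.map (algebraMap K B) = g₀ * h₀ := by
    apply MvPolynomial.map_injective _ hinj
    rw [map_mul, hg₀, hh₀, ← hgh, MvPolynomial.map_map, ← IsScalarTower.algebraMap_eq]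
    rfl
  simp only [← hg₀, ← hh₀, totalDegree_map_of_injective hinj,
    totalDegree_ne_zero_iff_exists_coeff] at hdegs
  obtain ⟨⟨m₁, hm₁, hg⟩, m₂, hm₂, hh⟩ := hdegs
  obtain ⟨ψ, hψ⟩ := exists_algHom_algebraicClosure_ne_zero (K := K) (mul_ne_zero hg hh)
  rw [map_mul, mul_ne_zero_iff] at hψ
  have hsplit := hfac (g₀.map ψ.toRingHom) (h₀.map ψ.toRingHom) <| by
    rw [← map_mul, ← hgh₀, MvPolynomial.map_map]
    exact congrArg (MvPolynomial.map · f) ψ.comp_algebraMap.symm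
  refine hsplit.elim (totalDegree_ne_zero_iff_exists_coeff.2 ⟨m₁, hm₁, ?_⟩)
    (totalDegree_ne_zero_iff_exists_coeff.2 ⟨m₂, hm₂, ?_⟩)
  · rw [MvPolynomial.coeff_map]
    exact hψ.1
  · rw [MvPolynomial.coeff_map]
    exact hψ.2

theorem geometricallyIrreducible_map_iff {L : Type*} [Field L] (i : K →+* L)
    {f : MvPolynomial σ K} :
    GeometricallyIrreducible (f.map i) ↔ GeometricallyIrreducible f := by
  refine ⟨fun hf ↦ ?_, fun hf ↦ ?_⟩
  · let := i.toAlgebra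
    let j : AlgebraicClosure K →ₐ[K] AlgebraicClosure L := IsAlgClosed.lift
    refine irreducible_of_irreducible_map (j : AlgebraicClosure K →+* AlgebraicClosure L) ?_
    rw [MvPolynomial.map_map, j.comp_algebraMap, IsScalarTower.algebraMap_eq K L,
      ← MvPolynomial.map_map]
    exact hf
  · rw [GeometricallyIrreducible, MvPolynomial.map_map]
    exact hf.irreducible_map _

end Descent

section GenericPolynomials

variable (σ : Type*) [Finite σ] (d : ℕ)

/-- The exponents of the monomials of degree at most `d`. -/
def exponentsLE : Finset (σ →₀ ℕ) :=
  (Finsupp.finite_of_degree_le (σ := σ) d).toFinset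

variable {σ d} {R S : Type*} [CommSemiring R] [CommSemiring S]

/-- The polynomial of total degree at most `d` with prescribed coefficients; it is the generic one
when these are independent variables. -/
def polynomialOfCoeffs (u : exponentsLE σ d → R) : MvPolynomial σ R :=
  ∑ m, MvPolynomial.monomial m.1 (u m)

theorem map_polynomialOfCoeffs (φ : R →+* S) (u : exponentsLE σ d → R) :
    (polynomialOfCoeffs u).map φ = polynomialOfCoeffs (φ ∘ u) := by
  simp [polynomialOfCoeffs]

theorem polynomialOfCoeffs_coeff {p : MvPolynomial σ R} (hp : p.totalDegree ≤ d) :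
    polynomialOfCoeffs (fun m : exponentsLE σ d ↦ p.coeff m) = p := by
  have hsupp : p.support ⊆ exponentsLE σ d := fun m hm ↦
    (Set.Finite.mem_toFinset _).2 ((MvPolynomial.le_totalDegree hm).trans hp)
  rw [polynomialOfCoeffs, Finset.sum_coe_sort _ fun m ↦ MvPolynomial.monomial m (p.coeff m),
    ← Finset.sum_subset hsupp fun m _ hm ↦ by
      rw [MvPolynomial.notMem_support_iff.1 hm, map_zero]]
  exact p.as_sum.symm

end GenericPolynomials

section Constructibility

open PrimeSpectrum Topology

variable {σ A : Type*} [CommRing A]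

/-- The fibre at `x` of the family of polynomials over fields given by a polynomial over `A`. -/
abbrev fiberAt (f : MvPolynomial σ A) (x : PrimeSpectrum A) :
    MvPolynomial σ x.asIdeal.ResidueField :=
  f.map (algebraMap A _)

theorem exists_map_fiberAt_eq {k : Type*} [Field k] {φ : A →+* k} {x : PrimeSpectrum A}
    (hx : x.asIdeal = RingHom.ker φ) :
    ∃ i : x.asIdeal.ResidueField →+* k, ∀ f : MvPolynomial σ A, (fiberAt f x).map i = f.map φ := by
  have hunit : x.asIdeal.primeCompl ≤ (IsUnit.submonoid k).comap φ := fun a ha ↦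
    isUnit_iff_ne_zero.2 fun h0 ↦ ha (hx ▸ RingHom.mem_ker.2 h0)
  refine ⟨Ideal.ResidueField.lift _ φ hx.le hunit, fun f ↦ ?_⟩
  rw [MvPolynomial.map_map]
  exact congrArg (MvPolynomial.map · f)
    (RingHom.ext (Ideal.ResidueField.lift_algebraMap _ φ _ hunit))

theorem geometricallyIrreducible_map_iff_fiberAt {k : Type*} [Field k] {f : MvPolynomial σ A}
    {φ : A →+* k} {x : PrimeSpectrum A} (hx : x.asIdeal = RingHom.ker φ) :
    GeometricallyIrreducible (f.map φ) ↔ GeometricallyIrreducible (fiberAt f x) := by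
  obtain ⟨i, hi⟩ := exists_map_fiberAt_eq (σ := σ) hx
  rw [← hi, geometricallyIrreducible_map_iff]

theorem isConstructible_setOf_fiberAt_eq_zero (f : MvPolynomial σ A) :
    IsConstructible {x | fiberAt f x = 0} := by
  have hlocus : {x | fiberAt f x = 0} = zeroLocus (f.coeff '' f.support) := by
    ext x
    simp only [Set.mem_ofPred_eq, MvPolynomial.ext_iff, MvPolynomial.coeff_map,
      MvPolynomial.coeff_zero, Ideal.algebraMap_residueField_eq_zero, mem_zeroLocus,
      Set.image_subset_iff]
    refine ⟨fun h m _ ↦ h m, fun h m ↦ ?_⟩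
    by_cases hm : m ∈ f.support
    · exact h hm
    · rw [MvPolynomial.notMem_support_iff.1 hm]
      exact zero_mem _
  rw [hlocus, ← isConstructible_compl]
  exact (isRetrocompact_zeroLocus_compl (f.support.finite_toSet.image _)).isConstructible
    (isClosed_zeroLocus _).isOpen_compl

theorem isConstructible_setOf_totalDegree_fiberAt_eq_zero (f : MvPolynomial σ A) :
    IsConstructible {x | (fiberAt f x).totalDegree = 0} := by
  convert! isConstructible_setOf_fiberAt_eq_zero (f - MvPolynomial.C (f.coeff 0)) using 3 with x
  rw [MvPolynomial.totalDegree_eq_zero_iff_eq_C, fiberAt, fiberAt, map_sub, sub_eq_zero,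
    MvPolynomial.map_C, MvPolynomial.coeff_map]

theorem geometricallyIrreducible_map_iff_of_toSet_eq {f : MvPolynomial σ A}
    {T : ConstructibleSetData A} (hT : T.toSet = {x | GeometricallyIrreducible (fiberAt f x)})
    {k : Type*} [Field k] (φ : A →+* k) :
    GeometricallyIrreducible (f.map φ) ↔ ∃ C ∈ T, (∀ t, φ (C.g t) = 0) ∧ φ C.f ≠ 0 := by
  rw [geometricallyIrreducible_map_iff_fiberAt (x := ⟨_, RingHom.ker_isPrime φ⟩) rfl]
  change _ ∈ {x | GeometricallyIrreducible (fiberAt f x)} ↔ _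
  rw [← hT]
  simp [ConstructibleSetData.toSet, BasicConstructibleSetData.toSet, mem_zeroLocus,
    Set.range_subset_iff, and_left_comm]

variable [Finite σ] {d : ℕ}

/-- The first of two generic polynomials of degree at most `d` with independent coefficients. -/
def genericLeftFactor (σ A : Type*) [CommRing A] [Finite σ] (d : ℕ) :
    MvPolynomial σ (MvPolynomial (exponentsLE σ d ⊕ exponentsLE σ d) A) :=
  polynomialOfCoeffs fun m ↦ MvPolynomial.X (Sum.inl m)

/-- The second of two generic polynomials of degree at most `d` with independent coefficients. -/
def genericRightFactor (σ A : Type*) [CommRing A] [Finite σ] (d : ℕ) :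
    MvPolynomial σ (MvPolynomial (exponentsLE σ d ⊕ exponentsLE σ d) A) :=
  polynomialOfCoeffs fun m ↦ MvPolynomial.X (Sum.inr m)

/-- The scheme of factorizations of `f` into two nonconstant polynomials of degree at most `d`, cut
out of the space of pairs of polynomials of degree at most `d`. -/
def factorizationLocus (f : MvPolynomial σ A) (d : ℕ) :
    Set (PrimeSpectrum (MvPolynomial (exponentsLE σ d ⊕ exponentsLE σ d) A)) :=
  {y | fiberAt (f.map MvPolynomial.C - genericLeftFactor σ A d * genericRightFactor σ A d) y = 0} ∩
    ({y | (fiberAt (genericLeftFactor σ A d) y).totalDegree = 0}ᶜ ∩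
      {y | (fiberAt (genericRightFactor σ A d) y).totalDegree = 0}ᶜ)

theorem isConstructible_factorizationLocus (f : MvPolynomial σ A) (d : ℕ) :
    IsConstructible (factorizationLocus f d) :=
  (isConstructible_setOf_fiberAt_eq_zero _).inter
    ((isConstructible_setOf_totalDegree_fiberAt_eq_zero _).compl.inter
      (isConstructible_setOf_totalDegree_fiberAt_eq_zero _).compl)

theorem not_geometricallyIrreducible_of_mem_factorizationLocus {f : MvPolynomial σ A}
    {y : PrimeSpectrum (MvPolynomial (exponentsLE σ d ⊕ exponentsLE σ d) A)}
    (hy : y ∈ factorizationLocus f d) :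
    ¬ GeometricallyIrreducible (fiberAt f (comap MvPolynomial.C y)) := by
  obtain ⟨hfac, hleft, hright⟩ := hy
  let φ : A →+* y.asIdeal.ResidueField :=
    (algebraMap (MvPolynomial (exponentsLE σ d ⊕ exponentsLE σ d) A) _).comp MvPolynomial.C
  have hker : (comap MvPolynomial.C y).asIdeal = RingHom.ker φ := by
    rw [← RingHom.comap_ker, Ideal.ker_algebraMap_residueField, comap_asIdeal]
  rw [← geometricallyIrreducible_map_iff_fiberAt hker]
  intro hirr
  have hirr' := irreducible_of_irreducible_map _ hirr
  rw [← MvPolynomial.map_map] at hirr'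
  rw [Set.mem_ofPred_eq, fiberAt, map_sub, map_mul, sub_eq_zero] at hfac
  exact ((irreducible_iff_totalDegree.1 hirr').2 _ _ hfac).elim hleft hright

theorem mem_image_factorizationLocus {f : MvPolynomial σ A} {k : Type*} [Field k]
    {φ : A →+* k} {x : PrimeSpectrum A} (hx : x.asIdeal = RingHom.ker φ)
    {g h : MvPolynomial σ k} (hgh : f.map φ = g * h) (hf : f.map φ ≠ 0)
    (hg : g.totalDegree ≠ 0) (hh : h.totalDegree ≠ 0) :
    x ∈ comap MvPolynomial.C '' factorizationLocus f f.totalDegree := by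
  have hdeg : g.totalDegree + h.totalDegree ≤ f.totalDegree := by
    rw [hgh, mul_ne_zero_iff] at hf
    rw [← MvPolynomial.totalDegree_mul_of_isDomain hf.1 hf.2, ← hgh]
    exact totalDegree_map_le φ f
  let θ : MvPolynomial (exponentsLE σ f.totalDegree ⊕ exponentsLE σ f.totalDegree) A →+* k :=
    MvPolynomial.eval₂Hom φ (Sum.elim (fun m ↦ g.coeff m) fun m ↦ h.coeff m)
  have hleft : (genericLeftFactor σ A f.totalDegree).map θ = g := by
    rw [genericLeftFactor, map_polynomialOfCoeffs]
    convert! polynomialOfCoeffs_coeff (Nat.le_of_add_right_le hdeg)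
    simp [θ]
  have hright : (genericRightFactor σ A f.totalDegree).map θ = h := by
    rw [genericRightFactor, map_polynomialOfCoeffs]
    convert! polynomialOfCoeffs_coeff (Nat.le_of_add_left_le hdeg)
    simp [θ]
  obtain ⟨i, hi⟩ := exists_map_fiberAt_eq (σ := σ) (φ := θ)
    (x := ⟨RingHom.ker θ, RingHom.ker_isPrime θ⟩) rfl
  refine ⟨⟨RingHom.ker θ, RingHom.ker_isPrime θ⟩, ⟨?_, ?_, ?_⟩, ?_⟩
  · apply MvPolynomial.map_injective i i.injective
    rw [hi, map_zero, map_sub, map_mul, hleft, hright, MvPolynomial.map_map, ← hgh, sub_eq_zero]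
    exact congrArg (MvPolynomial.map · f) (MvPolynomial.eval₂Hom_comp_C _ _)
  · rwa [Set.mem_compl_iff, Set.mem_ofPred_eq, ← totalDegree_map_of_injective i.injective,
      hi, hleft]
  · rwa [Set.mem_compl_iff, Set.mem_ofPred_eq, ← totalDegree_map_of_injective i.injective, hi,
      hright]
  · ext1
    rw [hx, comap_asIdeal, RingHom.comap_ker, MvPolynomial.eval₂Hom_comp_C]

theorem geometricallyIrreducible_fiberAt_iff {f : MvPolynomial σ A} {x : PrimeSpectrum A} :
    GeometricallyIrreducible (fiberAt f x) ↔ (fiberAt f x).totalDegree ≠ 0 ∧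
      x ∉ comap MvPolynomial.C '' factorizationLocus f f.totalDegree := by
  refine ⟨fun hx ↦ ⟨?_, ?_⟩, fun ⟨hdeg, hfac⟩ ↦ ?_⟩
  · exact (irreducible_iff_totalDegree.1 (irreducible_of_irreducible_map _ hx)).1
  · rintro ⟨y, hy, rfl⟩
    exact not_geometricallyIrreducible_of_mem_factorizationLocus hy hx
  · rw [GeometricallyIrreducible, irreducible_iff_totalDegree,
      totalDegree_map_of_injective (RingHom.injective _)]
    refine ⟨hdeg, fun g h hgh ↦ ?_⟩
    by_contra! hne
    have hne0 : (fiberAt f x).map (algebraMap _ (AlgebraicClosure x.asIdeal.ResidueField)) ≠ 0 :=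
      fun h0 ↦ hdeg <| by
        rw [← totalDegree_map_of_injective
          (algebraMap _ (AlgebraicClosure x.asIdeal.ResidueField)).injective, h0,
          MvPolynomial.totalDegree_zero]
    rw [MvPolynomial.map_map] at hgh hne0
    refine hfac (mem_image_factorizationLocus ?_ hgh hne0 hne.1 hne.2)
    rw [RingHom.ker_comp_of_injective _ (RingHom.injective _), Ideal.ker_algebraMap_residueField]

/-- EGA IV, 9.7.7. -/
theorem isConstructible_setOf_geometricallyIrreducible (f : MvPolynomial σ A) :
    IsConstructible {x | GeometricallyIrreducible (fiberAt f x)} := by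
  simp only [geometricallyIrreducible_fiberAt_iff]
  refine (isConstructible_setOf_totalDegree_fiberAt_eq_zero f).compl.inter
    (isConstructible_comap_image ?_ (isConstructible_factorizationLocus f _)).compl
  rw [← MvPolynomial.algebraMap_eq, RingHom.finitePresentation_algebraMap]
  infer_instance

/-- The locus of geometrically irreducible fibres is a finite union of sets `V(g) \ V(a)`, and the
elements `a` that occur make up `W`. -/
theorem exists_finset_geometricallyIrreducible_map (f : MvPolynomial σ A) :
    ∃ W : Finset A, ∀ {B : Type*} [CommRing B] (π : A →+* B) {K : Type*} [Field K] (ι : B →+* K),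
      Function.Injective ι → GeometricallyIrreducible ((f.map π).map ι) →
      ∃ a ∈ W, π a ≠ 0 ∧ ∀ {k : Type*} [Field k] (ψ : B →+* k), ψ (π a) ≠ 0 →
        GeometricallyIrreducible ((f.map π).map ψ) := by
  classical
  obtain ⟨T, hT⟩ :=
    exists_constructibleSetData_iff.2 (isConstructible_setOf_geometricallyIrreducible f)
  refine ⟨T.image (·.f), fun π K _ ι hι hirr ↦ ?_⟩
  rw [MvPolynomial.map_map, geometricallyIrreducible_map_iff_of_toSet_eq hT] at hirr
  obtain ⟨C, hCT, hg, hf⟩ := hirr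
  refine ⟨C.f, Finset.mem_image_of_mem _ hCT, fun h0 ↦ hf (by simp [h0]), fun ψ hψ ↦ ?_⟩
  rw [MvPolynomial.map_map, geometricallyIrreducible_map_iff_of_toSet_eq hT]
  have hπg (t) : π (C.g t) = 0 := (map_eq_zero_iff ι hι).1 (hg t)
  exact ⟨C, hCT, fun t ↦ by rw [RingHom.comp_apply, hπg, map_zero], hψ⟩

end Constructibility

section RegularExtension

open scoped TensorProduct

variable {K L : Type*} [Field K] [Field L] [Algebra K L] [IsIntegrallyClosedIn K L]

theorem minpoly_eq_map_of_isIntegrallyClosedIn {E : Type*} [Field E] [Algebra K E] [Algebra L E]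
    [IsScalarTower K L E] {x : E} (hx : IsIntegral K x) :
    minpoly L x = (minpoly K x).map (algebraMap K L) := by
  have hmem : minpoly L x ∈ lifts (algebraMap K L) := by
    refine (lifts_iff_coeff_lifts _).2 fun n ↦ ?_
    obtain ⟨y, hy⟩ := (lifts_iff_coeff_lifts _).1 (integralClosure.mem_lifts_of_monic_of_dvd_map L
      (minpoly.monic hx) (minpoly.monic hx.tower_top) (minpoly.dvd_map_of_isScalarTower K L x)) n
    exact hy ▸ IsIntegrallyClosedIn.algebraMap_eq_of_integral y.2
  obtain ⟨q, hq, -, hqmonic⟩ :=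
    lifts_and_natDegree_eq_and_monic hmem (minpoly.monic hx.tower_top)
  have hdvd : minpoly K x ∣ q := minpoly.dvd K x <| by
    rw [← aeval_map_algebraMap L, hq, minpoly.aeval]
  exact (eq_of_dvd_of_natDegree_le_of_leadingCoeff
    (minpoly.dvd_map_of_isScalarTower K L x)
    ((natDegree_map _).trans_le
      ((natDegree_le_of_dvd hdvd hqmonic.ne_zero).trans_eq (by rw [← hq, natDegree_map])))
    (by rw [minpoly.monic hx.tower_top, (minpoly.monic hx).map _]))

variable [PerfectField K]

theorem linearDisjoint_of_finiteDimensional {E : Type*} [Field E] [Algebra K E] [Algebra L E]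
    [IsScalarTower K L E] (A : IntermediateField K E) [FiniteDimensional K A] :
    A.LinearDisjoint L := by
  let pb := Field.powerBasisOfFiniteOfSeparable K A
  have hdim : pb.dim = (minpoly L (pb.gen : E)).natDegree := by
    have hint : IsIntegral K (pb.gen : E) := (Algebra.IsIntegral.isIntegral pb.gen).map A.val
    rw [minpoly_eq_map_of_isIntegrallyClosedIn hint, natDegree_map, ← pb.natDegree_minpoly]
    exact congrArg natDegree (minpoly.algHom_eq A.val A.val.injective _).symm
  refine .of_basis_left pb.basis ?_
  convert! (linearIndependent_pow (K := L) (pb.gen : E)).comp _ (Fin.cast_injective hdim)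
  ext i
  simp

theorem isDomain_tensorProduct_of_isAlgebraic (A : Type*) [Field A] [Algebra K A]
    [Algebra.IsAlgebraic K A] : IsDomain (A ⊗[K] L) := by
  let E := AlgebraicClosure L
  let i : A →ₐ[K] E := IsAlgClosed.lift
  refine Subalgebra.LinearDisjoint.isDomain_of_injective (fa := i)
    (fb := IsScalarTower.toAlgHom K L E) i.injective (algebraMap L E).injective ?_
  have : Algebra.IsIntegral K i.range :=
    .of_surjective i.rangeRestrict i.rangeRestrict_surjective
  refine .of_linearDisjoint_finite_left _ _ fun A' _ _ ↦ ?_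
  let M := A'.toIntermediateField' (isField_of_isIntegral_of_isField' (Field.toIsField K))
  have : FiniteDimensional K M := ‹Module.Finite K A'›
  exact linearDisjoint_of_finiteDimensional (L := L) M

theorem geometricallyIrreducible_of_ker_eq_span_singleton {σ : Type*} {f : MvPolynomial σ K}
    (hf : f ≠ 0) (φ : MvPolynomial σ K →ₐ[K] L) (hφ : RingHom.ker φ = Ideal.span {f}) :
    GeometricallyIrreducible f := by
  let Ω := AlgebraicClosure K
  have : IsDomain (Ω ⊗[K] L) := isDomain_tensorProduct_of_isAlgebraic Ω
  have : IsDomain (Ω ⊗[K] φ.range) := Function.Injective.isDomain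
    (Algebra.TensorProduct.map (AlgHom.id K Ω) φ.range.val)
    (Module.Flat.lTensor_preserves_injective_linearMap φ.range.val.toLinearMap
      Subtype.val_injective)
  have hprime : (Ideal.span {(1 : Ω) ⊗ₜ[K] f}).IsPrime := by
    have hker := Algebra.TensorProduct.lTensor_ker (A := Ω) φ.rangeRestrict
      φ.rangeRestrict_surjective
    rw [AlgHom.ker_rangeRestrict, hφ, Ideal.map_span, Set.image_singleton] at hker
    exact hker ▸ RingHom.ker_isPrime _
  have hmap : f.map (algebraMap K Ω) ≠ 0 := by
    rwa [Ne, map_eq_zero_iff _ (MvPolynomial.map_injective _ (algebraMap K Ω).injective)]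
  rw [← MvPolynomial.algebraTensorAlgEquiv_symm_map, Ideal.span_singleton_prime
    ((map_ne_zero_iff _ (AlgEquiv.injective _)).2 hmap), MulEquiv.prime_iff] at hprime
  exact hprime.irreducible

end RegularExtension

section PrimeFactors

open Finset Real

theorem card_primeFactors_le {q : ℕ} (hq : q ≠ 0) {x : ℝ} (hx : 1 < x) :
    (#q.primeFactors : ℝ) ≤ x + log q / log x := by
  have hx0 : 0 < x := one_pos.trans hx
  have hsmall : (#(q.primeFactors.filter fun p : ℕ ↦ (p : ℝ) ≤ x) : ℝ) ≤ x := by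
    have hsub : (q.primeFactors.filter fun p : ℕ ↦ (p : ℝ) ≤ x) ⊆ Icc 1 ⌊x⌋₊ := fun p hp ↦ by
      rw [mem_filter] at hp
      exact mem_Icc.2 ⟨(Nat.prime_of_mem_primeFactors hp.1).one_le, Nat.le_floor hp.2⟩
    refine (Nat.cast_le.2 (card_le_card hsub)).trans ?_
    rw [Nat.card_Icc, Nat.add_sub_cancel]
    exact Nat.floor_le hx0.le
  have hlarge : (#(q.primeFactors.filter fun p : ℕ ↦ ¬ (p : ℝ) ≤ x) : ℝ) ≤ log q / log x := by
    rw [le_div_iff₀ (log_pos hx), ← log_pow]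
    refine log_le_log (pow_pos hx0 _) ?_
    calc x ^ #(q.primeFactors.filter fun p : ℕ ↦ ¬ (p : ℝ) ≤ x)
        ≤ ∏ p ∈ q.primeFactors.filter (fun p : ℕ ↦ ¬ (p : ℝ) ≤ x), (p : ℝ) := by
          rw [← prod_const]
          exact prod_le_prod (fun _ _ ↦ hx0.le) fun p hp ↦ (not_le.1 (mem_filter.1 hp).2).le
      _ ≤ q := by
          rw [← Nat.cast_prod, Nat.cast_le]
          exact Nat.le_of_dvd (Nat.pos_of_ne_zero hq)
            ((prod_dvd_prod_of_subset _ _ _ (filter_subset _ _)).trans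
              (Nat.prod_primeFactors_dvd q))
  rw [← card_filter_add_card_filter_not (s := q.primeFactors) fun p : ℕ ↦ (p : ℝ) ≤ x,
    Nat.cast_add]
  exact add_le_add hsmall hlarge

theorem card_primeFactors_le_of_log_le {q : ℕ} (hq : q ≠ 0) {c l : ℝ} (hl : 1 < l)
    (hlog : log q ≤ c * l) : (#q.primeFactors : ℝ) ≤ (2 + 2 * c) * (l / log l) := by
  have hl0 : 0 < l := one_pos.trans hl
  have hsqrt : √l ≤ 2 * (l / log l) := by
    have hlogsqrt : log l ≤ 2 * √l := by
      have := log_le_self (sqrt_nonneg l)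
      rw [log_sqrt hl0.le] at this
      linarith
    rw [← mul_div_assoc, le_div_iff₀ (log_pos hl)]
    calc √l * log l ≤ √l * (2 * √l) := by gcongr
      _ = 2 * l := by rw [mul_left_comm, mul_self_sqrt hl0.le]
  calc (#q.primeFactors : ℝ) ≤ √l + log q / log √l :=
        card_primeFactors_le hq (lt_sqrt_of_sq_lt (by rwa [one_pow]))
    _ ≤ 2 * (l / log l) + c * l / (log l / 2) := by
        rw [log_sqrt hl0.le]
        gcongr
        exact (half_pos (log_pos hl)).le
    _ = (2 + 2 * c) * (l / log l) := by field_simp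

theorem one_lt_log_natCast {H : ℕ} (hH : 3 ≤ H) : 1 < log H := by
  rw [lt_log_iff_exp_lt (by positivity)]
  exact exp_one_lt_three.trans_le (by exact_mod_cast hH)

theorem abs_eval_le {ι R : Type*} [CommRing R] [LinearOrder R] [IsStrictOrderedRing R]
    (w : MvPolynomial ι R) {c : ι → R} {H : R} (hH : 1 ≤ H) (hc : ∀ i, |c i| ≤ H) :
    |MvPolynomial.eval c w| ≤ (∑ m ∈ w.support, |w.coeff m|) * H ^ w.totalDegree := by
  rw [MvPolynomial.eval_eq, sum_mul]
  refine (abs_sum_le_sum_abs _ _).trans (sum_le_sum fun m hm ↦ ?_)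
  rw [abs_mul, abs_prod]
  gcongr
  calc ∏ i ∈ m.support, |c i ^ m i| ≤ ∏ i ∈ m.support, H ^ m i :=
        prod_le_prod (fun _ _ ↦ abs_nonneg _) fun i _ ↦ by
          rw [abs_pow]
          exact pow_le_pow_left₀ (abs_nonneg _) (hc i) _
    _ = H ^ (m.sum fun _ e ↦ e) := prod_pow_eq_pow_sum _ _ _
    _ ≤ H ^ w.totalDegree := pow_le_pow_right₀ hH (MvPolynomial.le_totalDegree hm)

theorem exists_card_primeFactors_eval_le {ι : Type*} (w : MvPolynomial ι ℤ) :
    ∃ C : ℝ, 0 ≤ C ∧ ∀ (c : ι → ℤ) (H : ℕ), 3 ≤ H → (∀ i, (c i).natAbs ≤ H) →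
      MvPolynomial.eval c w ≠ 0 →
      (#(MvPolynomial.eval c w).natAbs.primeFactors : ℝ) ≤ C * (log H / log (log H)) := by
  set S : ℝ := 1 + ∑ m ∈ w.support, |((w.coeff m : ℤ) : ℝ)|
  have hS : 1 ≤ S := le_add_of_nonneg_right (sum_nonneg fun _ _ ↦ abs_nonneg _)
  have hlogS : 0 ≤ log S := log_nonneg hS
  refine ⟨2 + 2 * (log S + w.totalDegree), by positivity, fun c H hH hc hne ↦ ?_⟩
  have hlogH := one_lt_log_natCast hH
  refine card_primeFactors_le_of_log_le (Int.natAbs_ne_zero.2 hne) hlogH ?_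
  have : (0 : ℝ) < H := by positivity
  have heval : ((MvPolynomial.eval c w).natAbs : ℝ) ≤ S * H ^ w.totalDegree := by
    have hbound : |MvPolynomial.eval c w| ≤
        (∑ m ∈ w.support, |w.coeff m|) * (H : ℤ) ^ w.totalDegree :=
      abs_eval_le w (by omega) fun i ↦ by rw [Int.abs_eq_natAbs]; exact_mod_cast hc i
    calc ((MvPolynomial.eval c w).natAbs : ℝ)
        ≤ (∑ m ∈ w.support, |((w.coeff m : ℤ) : ℝ)|) * H ^ w.totalDegree := by
          rw [Nat.cast_natAbs]
          exact_mod_cast hbound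
      _ ≤ S * H ^ w.totalDegree := by
          gcongr
          exact le_add_of_nonneg_left zero_le_one
  calc log (MvPolynomial.eval c w).natAbs ≤ log (S * H ^ w.totalDegree) :=
        log_le_log (by positivity) heval
    _ = log S + w.totalDegree * log H := by
        rw [log_mul (by positivity) (by positivity), log_pow]
    _ ≤ (log S + w.totalDegree) * log H := by
        rw [add_mul]
        gcongr
        exact le_mul_of_one_le_right hlogS hlogH.le

end PrimeFactors

section SchwartzZippel

theorem ncard_setOf_eval_eq_zero_mul_card_le {ρ k : Type*} [Fintype ρ] [Field k] [Fintype k]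
    {Q : MvPolynomial ρ k} (hQ : Q ≠ 0) :
    {x : ρ → k | MvPolynomial.eval x Q = 0}.ncard * Fintype.card k ≤
      Q.totalDegree * Fintype.card k ^ Fintype.card ρ := by
  classical
  let e := Fintype.equivFin ρ
  have hSZ := MvPolynomial.schwartz_zippel_totalDegree
    ((map_ne_zero_iff _ (MvPolynomial.rename_injective e e.injective)).2 hQ) Finset.univ
  have hcard : (0 : ℚ≥0) < Fintype.card k := by exact_mod_cast Fintype.card_pos
  rw [Finset.card_univ, div_le_div_iff₀ (pow_pos hcard _) hcard,
    ← MvPolynomial.renameEquiv_apply k, MvPolynomial.totalDegree_renameEquiv] at hSZ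
  have himage : {x : ρ → k | MvPolynomial.eval x Q = 0}.ncard =
      {y ∈ Fintype.piFinset fun _ : Fin (Fintype.card ρ) ↦ (Finset.univ : Finset k) |
        MvPolynomial.eval y (MvPolynomial.rename e Q) = 0}.card := by
    rw [← Set.ncard_coe_finset,
      ← Set.ncard_image_of_injective _ (Equiv.arrowCongr e (.refl k)).injective]
    congr 1
    ext y
    simp only [Equiv.image_eq_preimage_symm, Equiv.arrowCongr_symm, Equiv.refl_symm,
      Set.preimage_ofPred_eq, Set.mem_ofPred_eq, MvPolynomial.eval_rename, Fintype.piFinset_univ,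
      Finset.coe_filter, Finset.mem_univ, true_and]
    exact Iff.rfl
  rw [himage]
  exact_mod_cast hSZ

end SchwartzZippel

section Specialization

open Finset Real

theorem exists_finset_map_castRingHom_ne_zero {ρ ι : Type*}
    (a : MvPolynomial ρ (MvPolynomial ι ℤ)) :
    ∃ C : ℝ, 0 ≤ C ∧ ∀ (c : ι → ℤ) (H : ℕ), 3 ≤ H → (∀ i, (c i).natAbs ≤ H) →
      a.map (MvPolynomial.eval c) ≠ 0 →
      ∃ E : Finset ℕ, (∀ p ∈ E, p.Prime) ∧ (#E : ℝ) ≤ C * (log H / log (log H)) ∧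
        ∀ p : ℕ, p.Prime → p ∉ E →
          (a.map (MvPolynomial.eval c)).map (Int.castRingHom (ZMod p)) ≠ 0 := by
  choose C hC0 hC using fun m ↦ exists_card_primeFactors_eval_le (a.coeff m)
  refine ⟨∑ m ∈ a.support, C m, sum_nonneg fun m _ ↦ hC0 m, fun c H hH hc hne ↦ ?_⟩
  obtain ⟨m, hm⟩ := MvPolynomial.ne_zero_iff.1 hne
  rw [MvPolynomial.coeff_map] at hm
  have hmem : m ∈ a.support := MvPolynomial.mem_support_iff.2 fun h0 ↦ hm (by rw [h0, map_zero])
  have hlogH := one_lt_log_natCast hH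
  refine ⟨_, fun p ↦ Nat.prime_of_mem_primeFactors, (hC m c H hH hc hm).trans ?_,
    fun p hp hpE h0 ↦ hpE ?_⟩
  · have : 0 ≤ log H / log (log H) := div_nonneg (by positivity) (log_pos hlogH).le
    gcongr
    exact single_le_sum (fun m _ ↦ hC0 m) hmem
  · have hcoeff := congrArg (MvPolynomial.coeff m) h0
    rw [MvPolynomial.coeff_map, MvPolynomial.coeff_map, MvPolynomial.coeff_zero, eq_intCast,
      ZMod.intCast_zmod_eq_zero_iff_dvd] at hcoeff
    exact Nat.mem_primeFactors.2 ⟨hp, Int.natCast_dvd.1 hcoeff, Int.natAbs_ne_zero.2 hm⟩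

theorem exists_finset_ncard_eval₂_eq_zero_le {ρ ι : Type*} [Fintype ρ]
    (a : MvPolynomial ρ (MvPolynomial ι ℤ)) :
    ∃ C : ℝ, 0 ≤ C ∧ ∀ (c : ι → ℤ) (H : ℕ), 3 ≤ H → (∀ i, (c i).natAbs ≤ H) →
      a.map (MvPolynomial.eval c) ≠ 0 →
      ∃ E : Finset ℕ, (∀ p ∈ E, p.Prime) ∧ (#E : ℝ) ≤ C * (log H / log (log H)) ∧
        ∀ p : ℕ, p.Prime → p ∉ E →
          {x : ρ → ZMod p | MvPolynomial.eval₂ (Int.castRingHom (ZMod p)) x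
            (a.map (MvPolynomial.eval c)) = 0}.ncard * p ≤
          a.totalDegree * p ^ Fintype.card ρ := by
  obtain ⟨C, hC0, hC⟩ := exists_finset_map_castRingHom_ne_zero a
  refine ⟨C, hC0, fun c H hH hc hne ↦ ?_⟩
  obtain ⟨E, hE, hcard, hred⟩ := hC c H hH hc hne
  refine ⟨E, hE, hcard, fun p hp hpE ↦ ?_⟩
  have : Fact p.Prime := ⟨hp⟩
  have hzeros := ncard_setOf_eval_eq_zero_mul_card_le (hred p hp hpE)
  simp only [MvPolynomial.eval_map, ZMod.card] at hzeros
  refine hzeros.trans (Nat.mul_le_mul_right _ ?_)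
  exact (totalDegree_map_le _ _).trans (totalDegree_map_le _ _)

variable (σ ρ : Type*) [Finite σ]

/-- The generic polynomial of degree at most `d` in the variables `σ` whose coefficients are
themselves generic polynomials of degree at most `d` in the variables `ρ`; every polynomial over
`ℤ[ρ]` satisfying these degree bounds is a specialization of it. -/
def genericFamily [Finite ρ] (d : ℕ) :
    MvPolynomial σ (MvPolynomial ρ (MvPolynomial (exponentsLE σ d × exponentsLE ρ d) ℤ)) :=
  polynomialOfCoeffs fun m ↦ polynomialOfCoeffs fun m' ↦ MvPolynomial.X (m, m')

variable {σ ρ}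

theorem map_genericFamily [Finite ρ] {d : ℕ} {G : MvPolynomial σ (MvPolynomial ρ ℤ)}
    (hG : G.totalDegree ≤ d) (hcoeff : ∀ m, (G.coeff m).totalDegree ≤ d) :
    (genericFamily σ ρ d).map
      (MvPolynomial.map (MvPolynomial.eval fun q ↦ (G.coeff q.1).coeff q.2)) = G := by
  rw [genericFamily, map_polynomialOfCoeffs]
  convert polynomialOfCoeffs_coeff hG with m
  rw [Function.comp_apply, map_polynomialOfCoeffs]
  convert polynomialOfCoeffs_coeff (hcoeff m) with m'
  exact MvPolynomial.eval_X _

variable (σ ρ) in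
theorem exists_finset_ncard_not_geometricallyIrreducible_le [Fintype ρ] (d : ℕ) :
    ∃ C C' : ℝ, 0 < C ∧ 0 < C' ∧ ∀ (G : MvPolynomial σ (MvPolynomial ρ ℤ)) (H : ℕ), 3 ≤ H →
      G.totalDegree ≤ d → (∀ m, (G.coeff m).totalDegree ≤ d) →
      (∀ m m', ((G.coeff m).coeff m').natAbs ≤ H) →
      ∀ {K : Type*} [Field K] (ι : MvPolynomial ρ ℤ →+* K), Function.Injective ι →
      GeometricallyIrreducible (G.map ι) →
      ∃ E : Finset ℕ, (∀ p ∈ E, p.Prime) ∧ (#E : ℝ) ≤ C * (log H / log (log H)) ∧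
        ∀ (p : ℕ) [Fact p.Prime], p ∉ E →
          ({x : ρ → ZMod p | ¬ GeometricallyIrreducible
            (G.map (MvPolynomial.eval₂Hom (Int.castRingHom (ZMod p)) x))}.ncard * p : ℝ) ≤
          C' * p ^ Fintype.card ρ := by
  obtain ⟨W, hW⟩ := exists_finset_geometricallyIrreducible_map (genericFamily σ ρ d)
  choose C hC0 hC using fun a : MvPolynomial ρ (MvPolynomial _ ℤ) ↦
    exists_finset_ncard_eval₂_eq_zero_le a
  refine ⟨1 + ∑ a ∈ W, C a, 1 + ∑ a ∈ W, (a.totalDegree : ℝ),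
    add_pos_of_pos_of_nonneg one_pos (sum_nonneg fun a _ ↦ hC0 a), by positivity, ?_⟩
  intro G H hH hG hcoeff hnorm K _ ι hι hirr
  have hspec := map_genericFamily hG hcoeff
  obtain ⟨a, haW, ha0, ha⟩ := hW (MvPolynomial.map
    (MvPolynomial.eval fun q ↦ (G.coeff q.1).coeff q.2)) ι hι (hspec.symm ▸ hirr)
  rw [hspec] at ha
  obtain ⟨E, hE, hcard, hzeros⟩ := hC a _ H hH (fun q ↦ hnorm q.1 q.2) ha0
  have hlogH := one_lt_log_natCast hH
  have : 0 ≤ log H / log (log H) := div_nonneg (by positivity) (log_pos hlogH).le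
  refine ⟨E, hE, hcard.trans ?_, fun p _ hpE ↦ ?_⟩
  · gcongr
    exact (single_le_sum (fun a _ ↦ hC0 a) haW).trans (le_add_of_nonneg_left zero_le_one)
  · have hsub : {x : ρ → ZMod p | ¬ GeometricallyIrreducible
          (G.map (MvPolynomial.eval₂Hom (Int.castRingHom (ZMod p)) x))} ⊆
        {x | MvPolynomial.eval₂ (Int.castRingHom (ZMod p)) x (a.map
          (MvPolynomial.eval fun q ↦ (G.coeff q.1).coeff q.2)) = 0} := fun x hx ↦
      not_not.1 fun hne ↦ hx (ha _ hne)
    calc ({x : ρ → ZMod p | ¬ GeometricallyIrreducible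
            (G.map (MvPolynomial.eval₂Hom (Int.castRingHom (ZMod p)) x))}.ncard * p : ℝ)
        ≤ a.totalDegree * p ^ Fintype.card ρ := by
          exact_mod_cast (Nat.mul_le_mul_right p (Set.ncard_le_ncard hsub)).trans
            (hzeros p Fact.out hpE)
      _ ≤ (1 + ∑ a ∈ W, (a.totalDegree : ℝ)) * p ^ Fintype.card ρ := by
          gcongr
          exact (single_le_sum (f := fun a ↦ (a.totalDegree : ℝ)) (fun _ _ ↦ Nat.cast_nonneg _)
            haW).trans (le_add_of_nonneg_left zero_le_one)

end Specialization

section Separation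

theorem sumAlgEquiv_monomial {R S T : Type*} [CommSemiring R] (n : S ⊕ T →₀ ℕ) (r : R) :
    MvPolynomial.sumAlgEquiv R S T (MvPolynomial.monomial n r) =
      MvPolynomial.monomial (Finsupp.sumFinsuppAddEquivProdFinsupp n).1
        (MvPolynomial.monomial (Finsupp.sumFinsuppAddEquivProdFinsupp n).2 r) := by
  simp [MvPolynomial.sumAlgEquiv, MvPolynomial.monomial]

theorem coeff_coeff_sumAlgEquiv {R S T : Type*} [CommSemiring R] (f : MvPolynomial (S ⊕ T) R)
    (m : S →₀ ℕ) (m' : T →₀ ℕ) :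
    ((MvPolynomial.sumAlgEquiv R S T f).coeff m).coeff m' = f.coeff (m.sumElim m') := by
  classical
  induction f using MvPolynomial.induction_on' with
  | monomial n r =>
    obtain ⟨⟨l, l'⟩, rfl⟩ := Finsupp.sumFinsuppAddEquivProdFinsupp.symm.surjective n
    have hinj : l.sumElim l' = m.sumElim m' ↔ l = m ∧ l' = m' :=
      Finsupp.sumFinsuppAddEquivProdFinsupp.symm.injective.eq_iff.trans Prod.mk_inj
    rw [sumAlgEquiv_monomial, AddEquiv.apply_symm_apply]
    simp [MvPolynomial.coeff_monomial, apply_ite (MvPolynomial.coeff m'), ← ite_and, hinj]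
  | add p q hp hq => simp only [map_add, MvPolynomial.coeff_add, hp, hq]

variable {σ : Type*} [DecidableEq σ]

/-- The variables `Y, (Xᵢ)ᵢ` split into `Y, Xⱼ` on one side and the remaining `Xᵢ` on the other;
`Y` is encoded by `none`. -/
def separateEquiv (j : σ) : Option σ ≃ Option Unit ⊕ {i // i ≠ j} where
  toFun i := i.elim (.inl none) fun i ↦ if h : i = j then .inl (some ()) else .inr ⟨i, h⟩
  invFun := Sum.elim (Option.map fun _ ↦ j) fun i ↦ some i
  left_inv i := by
    rcases i with _ | i
    · rfl
    · by_cases h : i = j <;> simp [h]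
  right_inv i := by
    rcases i with (_ | _) | i
    · rfl
    · simp
    · simp [i.2]

variable (R : Type*) [CommSemiring R]

/-- `R[X₁, …, Xₙ][Y]` regarded as the polynomials in `Y` and `Xⱼ` whose coefficients are
polynomials in the other variables. -/
def separate (j : σ) :
    (MvPolynomial σ R)[X] ≃ₐ[R] MvPolynomial (Option Unit) (MvPolynomial {i // i ≠ j} R) :=
  (MvPolynomial.optionEquivLeft R σ).symm.trans <|
    (MvPolynomial.renameEquiv R (separateEquiv j)).trans <| MvPolynomial.sumAlgEquiv R _ _

variable {R} (j : σ)

theorem separate_X : separate R j X = MvPolynomial.X none := by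
  simp [separate, separateEquiv]

theorem separate_C_C (r : R) :
    separate R j (C (MvPolynomial.C r)) = MvPolynomial.C (MvPolynomial.C r) := by
  simp [separate]

theorem separate_C_X_self : separate R j (C (MvPolynomial.X j)) = MvPolynomial.X (some ()) := by
  simp [separate, separateEquiv]

theorem separate_C_X_of_ne {i : σ} (hi : i ≠ j) :
    separate R j (C (MvPolynomial.X i)) = MvPolynomial.C (MvPolynomial.X ⟨i, hi⟩) := by
  simp [separate, separateEquiv, hi]

/-- The exponent in the variables `Y, (Xᵢ)ᵢ` with prescribed parts in `Y, Xⱼ` and in the remaining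
variables. -/
def separateExponent (m : Option Unit →₀ ℕ) (m' : {i // i ≠ j} →₀ ℕ) : Option σ →₀ ℕ :=
  (m.sumElim m').mapDomain (separateEquiv j).symm

theorem degree_separateExponent (m : Option Unit →₀ ℕ) (m' : {i // i ≠ j} →₀ ℕ) :
    (separateExponent j m m').degree = m.degree + m'.degree := by
  rw [separateExponent, Finsupp.degree_mapDomain, Finsupp.sumElim_eq_add, map_add,
    Finsupp.degree_mapDomain, Finsupp.degree_mapDomain]

theorem coeff_coeff_separate (F : (MvPolynomial σ R)[X]) (m : Option Unit →₀ ℕ)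
    (m' : {i // i ≠ j} →₀ ℕ) :
    ((separate R j F).coeff m).coeff m' =
      (F.coeff (separateExponent j m m' none)).coeff (separateExponent j m m').some := by
  obtain ⟨f, rfl⟩ := (MvPolynomial.optionEquivLeft R σ).surjective F
  rw [MvPolynomial.optionEquivLeft_coeff_some_coeff_none R σ, separate, AlgEquiv.trans_apply,
    AlgEquiv.symm_apply_apply, AlgEquiv.trans_apply, coeff_coeff_sumAlgEquiv,
    ← MvPolynomial.coeff_rename_mapDomain _ (separateEquiv j).injective, separateExponent,
    ← Finsupp.mapDomain_comp, Equiv.self_comp_symm, Finsupp.mapDomain_id,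
    MvPolynomial.renameEquiv_apply]

theorem separate_map {S : Type*} [CommSemiring S] (φ : R →+* S) (F : (MvPolynomial σ R)[X]) :
    separate S j (F.map (MvPolynomial.map φ)) =
      (separate R j F).map (MvPolynomial.map φ) := by
  ext m m'
  simp only [MvPolynomial.coeff_map, Polynomial.coeff_map, coeff_coeff_separate]

theorem map_eval₂Hom_separate {S : Type*} [CommSemiring S]
    (φ : R →+* S) (x : {i // i ≠ j} → S) (F : (MvPolynomial σ R)[X]) :
    (separate R j F).map (MvPolynomial.eval₂Hom φ x) =
      (separate S j (F.map (MvPolynomial.map φ))).map (MvPolynomial.eval x) := by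
  rw [separate_map, MvPolynomial.map_map]
  congr 1
  exact MvPolynomial.ringHom_ext (by simp) (by simp)

end Separation

section DegreeBounds

variable {n : ℕ} {R : Type*} [CommSemiring R] (j : Fin n)

theorem add_degree_le_totalDeg {F : (MvPolynomial (Fin n) R)[X]} {k : ℕ} {m : Fin n →₀ ℕ}
    (h : (F.coeff k).coeff m ≠ 0) : k + m.degree ≤ totalDeg F := by
  have hk : k ∈ F.support := mem_support_iff.2 fun h0 ↦ h (by rw [h0, MvPolynomial.coeff_zero])
  calc k + m.degree ≤ k + (F.coeff k).totalDegree := by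
        gcongr
        exact MvPolynomial.le_totalDegree (MvPolynomial.mem_support_iff.2 h)
    _ ≤ totalDeg F := Finset.le_sup (f := fun k ↦ k + (F.coeff k).totalDegree) hk

theorem natAbs_coeff_coeff_le_polyNorm (F : (MvPolynomial (Fin n) ℤ)[X]) (k : ℕ)
    (m : Fin n →₀ ℕ) : ((F.coeff k).coeff m).natAbs ≤ polyNorm F := by
  by_cases hm : (F.coeff k).coeff m = 0
  · simp [hm]
  have hk : k ∈ F.support := mem_support_iff.2 fun h0 ↦ hm (by rw [h0, MvPolynomial.coeff_zero])
  calc ((F.coeff k).coeff m).natAbs ≤ mvNorm (F.coeff k) :=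
        Finset.le_sup (f := fun m ↦ ((F.coeff k).coeff m).natAbs)
          (MvPolynomial.mem_support_iff.2 hm)
    _ ≤ polyNorm F := Finset.le_sup (f := fun k ↦ mvNorm (F.coeff k)) hk

theorem degree_add_degree_le_totalDeg {F : (MvPolynomial (Fin n) R)[X]} {m : Option Unit →₀ ℕ}
    {m' : {i // i ≠ j} →₀ ℕ} (h : ((separate R j F).coeff m).coeff m' ≠ 0) :
    m.degree + m'.degree ≤ totalDeg F := by
  rw [coeff_coeff_separate] at h
  rw [← degree_separateExponent]
  exact (Finsupp.sum_option_index _ (fun _ e ↦ e) (fun _ ↦ rfl) fun _ _ _ ↦ rfl).trans_le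
    (add_degree_le_totalDeg h)

theorem totalDegree_separate_le (F : (MvPolynomial (Fin n) R)[X]) :
    (separate R j F).totalDegree ≤ totalDeg F := by
  refine Finset.sup_le fun m hm ↦ ?_
  obtain ⟨m', hm'⟩ := MvPolynomial.ne_zero_iff.1 (MvPolynomial.mem_support_iff.1 hm)
  exact (Nat.le_add_right _ _).trans (degree_add_degree_le_totalDeg j hm')

theorem totalDegree_coeff_separate_le (F : (MvPolynomial (Fin n) R)[X]) (m : Option Unit →₀ ℕ) :
    ((separate R j F).coeff m).totalDegree ≤ totalDeg F := by
  refine Finset.sup_le fun m' hm' ↦ ?_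
  exact (Nat.le_add_left _ _).trans
    (degree_add_degree_le_totalDeg j (MvPolynomial.mem_support_iff.1 hm'))

theorem natAbs_coeff_coeff_separate_le (F : (MvPolynomial (Fin n) ℤ)[X]) (m : Option Unit →₀ ℕ)
    (m' : {i // i ≠ j} →₀ ℕ) : (((separate ℤ j F).coeff m).coeff m').natAbs ≤ polyNorm F := by
  rw [coeff_coeff_separate]
  exact natAbs_coeff_coeff_le_polyNorm F _ _

end DegreeBounds

section Substitution

theorem irreducible_map_aeval_of_geometricallyIrreducible {σ k Ω : Type*} [DecidableEq σ] [Field k]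
    [Field Ω] [Algebra k Ω] {j : σ} {x : {i // i ≠ j} → k} {P : (MvPolynomial σ k)[X]}
    (h : GeometricallyIrreducible ((separate k j P).map (MvPolynomial.eval x))) :
    Irreducible (P.map (MvPolynomial.aeval fun i ↦ if h : i = j then
      (MvPolynomial.X i : MvPolynomial σ Ω)
      else MvPolynomial.C (algebraMap k Ω (x ⟨i, h⟩))).toRingHom) := by
  have hinj : Function.Injective (Option.map fun _ : Unit ↦ j) :=
    Option.map_injective fun _ _ _ ↦ rfl
  convert (MulEquiv.irreducible_iff (MvPolynomial.optionEquivLeft Ω σ)).2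
    (irreducible_rename hinj (h.irreducible_map (algebraMap k Ω)))
  suffices hhom : mapRingHom (MvPolynomial.aeval fun i ↦ if h : i = j then
      (MvPolynomial.X i : MvPolynomial σ Ω)
      else MvPolynomial.C (algebraMap k Ω (x ⟨i, h⟩))).toRingHom =
      ((MvPolynomial.optionEquivLeft Ω σ).toAlgHom.toRingHom.comp
      (MvPolynomial.rename (Option.map fun _ : Unit ↦ j)).toRingHom).comp
      (((MvPolynomial.map (algebraMap k Ω)).comp (MvPolynomial.map (MvPolynomial.eval x))).comp
        (separate k j).toAlgHom.toRingHom) from RingHom.congr_fun hhom P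
  refine Polynomial.ringHom_ext' (MvPolynomial.ringHom_ext (fun r ↦ ?_) fun i ↦ ?_) ?_
  · simp [separate_C_C, MvPolynomial.optionEquivLeft_C]
  · obtain rfl | hi := eq_or_ne i j
    · simp [separate_C_X_self, MvPolynomial.optionEquivLeft_X_some]
    · simp [separate_C_X_of_ne j hi, hi, MvPolynomial.optionEquivLeft_C]
  · simp [separate_X, MvPolynomial.optionEquivLeft_X_none]

theorem ncard_not_irreducible_le {σ k Ω : Type*} [Finite σ] [DecidableEq σ] [Field k] [Finite k]
    [Field Ω] [Algebra k Ω] {R : Type*} [CommRing R] (φ : R →+* k) (j : σ)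
    (F : (MvPolynomial σ R)[X]) :
    {x : {i // i ≠ j} → k | ¬ Irreducible ((F.map (MvPolynomial.map φ)).map
        (MvPolynomial.aeval fun i ↦ if h : i = j then (MvPolynomial.X i : MvPolynomial σ Ω)
          else MvPolynomial.C (algebraMap k Ω (x ⟨i, h⟩))).toRingHom)}.ncard ≤
      {x : {i // i ≠ j} → k | ¬ GeometricallyIrreducible
        ((separate R j F).map (MvPolynomial.eval₂Hom φ x))}.ncard := by
  refine Set.ncard_le_ncard (fun x hx hirr ↦ hx ?_) (Set.toFinite _)
  rw [map_eval₂Hom_separate] at hirr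
  exact irreducible_map_aeval_of_geometricallyIrreducible hirr

end Substitution

section FunctionField

theorem irreducible_of_irreducible_map_map {σ k l : Type*} [Field k] [Field l] (i : k →+* l)
    {P : (MvPolynomial σ k)[X]} (h : Irreducible (P.map (MvPolynomial.map i))) :
    Irreducible P := by
  obtain ⟨f, rfl⟩ := (MvPolynomial.optionEquivLeft k σ).surjective P
  refine (MulEquiv.irreducible_iff (MvPolynomial.optionEquivLeft k σ)).2
    (irreducible_of_irreducible_map i ?_)
  rw [← MulEquiv.irreducible_iff (MvPolynomial.optionEquivLeft l σ)]
  convert h using 1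
  ext m d
  rw [MvPolynomial.optionEquivLeft_coeff_coeff, MvPolynomial.coeff_map, Polynomial.coeff_map,
    MvPolynomial.coeff_map, MvPolynomial.optionEquivLeft_coeff_coeff]

theorem degreeOf_eq_zero_iff_exists_rename {σ R : Type*} [CommSemiring R] {j : σ}
    {a : MvPolynomial σ R} :
    a.degreeOf j = 0 ↔ ∃ b : MvPolynomial {i // i ≠ j} R, b.rename Subtype.val = a := by
  classical
  constructor
  · intro h
    refine MvPolynomial.exists_rename_eq_of_vars_subset_range a _ Subtype.val_injective ?_
    exact fun i hi ↦ ⟨⟨i, fun hij ↦ MvPolynomial.mem_vars_iff_degreeOf_ne_zero.1 hi (hij ▸ h)⟩, rfl⟩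
  · rintro ⟨b, rfl⟩
    by_contra h
    obtain ⟨i, -, hi⟩ := Finset.mem_image.1
      (MvPolynomial.vars_rename _ b (MvPolynomial.mem_vars_iff_degreeOf_ne_zero.2 h))
    exact i.2 hi

theorem ker_eq_span_singleton_algebraMap {R S L : Type*} [CommRing R] [CommRing S] [Semiring L]
    [Algebra R S] (M : Submonoid R) [IsLocalization M S] {φ : S →+* L} {f : R}
    (h : RingHom.ker (φ.comp (algebraMap R S)) = Ideal.span {f}) :
    RingHom.ker φ = Ideal.span {algebraMap R S f} := by
  rw [← IsLocalization.map_under M S (RingHom.ker φ), Ideal.under_def, RingHom.comap_ker, h,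
    Ideal.map_span, Set.image_singleton]

theorem ker_mk_comp_mapRingHom {R K : Type*} [CommRing R] [IsDomain R] [NormalizedGCDMonoid R]
    [Field K] [Algebra R K] [IsFractionRing R K] {P : R[X]} (hP : P.IsPrimitive) :
    RingHom.ker ((AdjoinRoot.mk (P.map (algebraMap R K))).comp (mapRingHom (algebraMap R K))) =
      Ideal.span {P} := by
  ext Q
  rw [RingHom.mem_ker, RingHom.comp_apply, AdjoinRoot.mk_eq_zero, coe_mapRingHom,
    Ideal.mem_span_singleton]
  exact ⟨hP.dvd_of_fraction_map_dvd_fraction_map, fun h ↦ Polynomial.map_dvd _ h⟩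

variable {n : ℕ} {F : (MvPolynomial (Fin n) ℤ)[X]}

theorem AbsIrred.irreducible_toQ (hF : AbsIrred F) : Irreducible (toQ F) := by
  refine irreducible_of_irreducible_map_map (algebraMap ℚ (AlgebraicClosure ℚ)) ?_
  have hcomp : (MvPolynomial.map (algebraMap ℚ (AlgebraicClosure ℚ))).comp
      (MvPolynomial.map (σ := Fin n) (Int.castRingHom ℚ)) =
      MvPolynomial.map (Int.castRingHom (AlgebraicClosure ℚ)) :=
    MvPolynomial.ringHom_ext (by simp) (by simp)
  rwa [toQ, Polynomial.map_map, hcomp]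

theorem natDegree_toQ : (toQ F).natDegree = F.natDegree :=
  natDegree_map_eq_of_injective (MvPolynomial.map_injective _ (RingHom.injective_int _)) F

theorem AbsIrred.isPrimitive_toQ (hF : AbsIrred F) (hd : F.natDegree ≠ 0) :
    (toQ F).IsPrimitive :=
  hF.irreducible_toQ.isPrimitive (natDegree_toQ.trans_ne hd)

theorem AbsIrred.irreducible_toFrac (hF : AbsIrred F) (hd : F.natDegree ≠ 0) :
    Irreducible (toFrac F) := by
  obtain ⟨_⟩ : Nonempty (NormalizedGCDMonoid (MvPolynomial (Fin n) ℚ)) := inferInstance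
  exact (hF.isPrimitive_toQ hd).irreducible_iff_irreducible_map_fraction_map.1 hF.irreducible_toQ

variable (F) (j : Fin n)

/-- The canonical map from the polynomials not involving `Xⱼ` to `ℚ(X)[Y]/(F)`. -/
def coordMap : MvPolynomial {i // i ≠ j} ℚ →+* AdjoinRoot (toFrac F) :=
  (structMap F).comp (MvPolynomial.rename Subtype.val).toRingHom

theorem coordMem_iff {z : AdjoinRoot (toFrac F)} :
    CoordMem j F z ↔ ∃ a b, coordMap F j b ≠ 0 ∧ z * coordMap F j b = coordMap F j a := by
  simp only [CoordMem, degreeOf_eq_zero_iff_exists_rename]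
  constructor
  · rintro ⟨_, _, ⟨a, rfl⟩, ⟨b, rfl⟩, h⟩
    exact ⟨a, b, h⟩
  · rintro ⟨a, b, h⟩
    exact ⟨_, _, ⟨a, rfl⟩, ⟨b, rfl⟩, h⟩

variable [Fact (Irreducible (toFrac F))]

theorem coordMap_injective : Function.Injective (coordMap F j) :=
  ((algebraMap (RF n) _).injective.comp (IsFractionRing.injective _ _)).comp
    (MvPolynomial.rename_injective _ Subtype.val_injective)

/-- `ℚ(X)[Y]/(F)` as an extension of the field of rational functions not involving `Xⱼ`. -/
abbrev coordAlgebra :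
    Algebra (FractionRing (MvPolynomial {i // i ≠ j} ℚ)) (AdjoinRoot (toFrac F)) :=
  (IsFractionRing.lift (coordMap_injective F j)).toAlgebra

attribute [local instance] coordAlgebra

theorem algebraMap_algebraMap_eq_coordMap (a : MvPolynomial {i // i ≠ j} ℚ) :
    algebraMap (FractionRing (MvPolynomial {i // i ≠ j} ℚ)) (AdjoinRoot (toFrac F))
      (algebraMap _ _ a) = coordMap F j a :=
  IsFractionRing.lift_algebraMap (coordMap_injective F j) a

theorem coordMem_iff_exists_algebraMap_eq {z : AdjoinRoot (toFrac F)} :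
    CoordMem j F z ↔ ∃ y : FractionRing (MvPolynomial {i // i ≠ j} ℚ), algebraMap _ _ y = z := by
  rw [coordMem_iff]
  constructor
  · rintro ⟨a, b, hb, h⟩
    refine ⟨algebraMap _ _ a / algebraMap _ _ b, ?_⟩
    rw [map_div₀, algebraMap_algebraMap_eq_coordMap, algebraMap_algebraMap_eq_coordMap, ← h,
      mul_div_cancel_right₀ _ hb]
  · rintro ⟨y, rfl⟩
    obtain ⟨a, b, hb, rfl⟩ := IsFractionRing.div_surjective (A := MvPolynomial {i // i ≠ j} ℚ) y
    have hb' : coordMap F j b ≠ 0 :=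
      (map_ne_zero_iff _ (coordMap_injective F j)).2 (nonZeroDivisors.ne_zero hb)
    refine ⟨a, b, hb', ?_⟩
    rw [map_div₀, algebraMap_algebraMap_eq_coordMap, algebraMap_algebraMap_eq_coordMap,
      div_mul_cancel₀ _ hb']

theorem isIntegrallyClosedIn_of_coordMem (hcl : ∀ z, AlgOverCoord j F z → CoordMem j F z) :
    IsIntegrallyClosedIn (FractionRing (MvPolynomial {i // i ≠ j} ℚ))
      (AdjoinRoot (toFrac F)) := by
  refine isIntegrallyClosedIn_iff.2
    ⟨FaithfulSMul.algebraMap_injective _ _, fun {z} ⟨P, hP, hz⟩ ↦ ?_⟩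
  refine (coordMem_iff_exists_algebraMap_eq F j).1 (hcl z ⟨P.map (algebraMap _ _),
    (hP.map _).ne_zero, fun k ↦ (coordMem_iff_exists_algebraMap_eq F j).2 ⟨P.coeff k, ?_⟩, ?_⟩)
  · rw [Polynomial.coeff_map]
  · rwa [eval_map]

/-- The evaluation at the generators `Y` and `Xⱼ` of `ℚ(X)[Y]/(F)` over the field of rational
functions not involving `Xⱼ`. -/
def evalGenerators : MvPolynomial (Option Unit) (FractionRing (MvPolynomial {i // i ≠ j} ℚ)) →ₐ[
    FractionRing (MvPolynomial {i // i ≠ j} ℚ)] AdjoinRoot (toFrac F) :=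
  MvPolynomial.aeval fun o ↦ o.elim (AdjoinRoot.root (toFrac F))
    fun _ ↦ structMap F (MvPolynomial.X j)

theorem evalGenerators_comp_map_comp_separate :
    ((evalGenerators F j).toRingHom.comp (MvPolynomial.map (algebraMap _ _))).comp
      (separate ℚ j).toAlgHom.toRingHom =
      (AdjoinRoot.mk (toFrac F)).comp
        (mapRingHom (algebraMap (MvPolynomial (Fin n) ℚ) (RF n))) := by
  refine Polynomial.ringHom_ext' (MvPolynomial.ringHom_ext (fun r ↦ ?_) fun i ↦ ?_) ?_
  · simp [separate_C_C, evalGenerators, algebraMap_algebraMap_eq_coordMap, coordMap, structMap]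
  · obtain rfl | hi := eq_or_ne i j
    · simp [separate_C_X_self, evalGenerators, structMap]
    · simp [separate_C_X_of_ne j hi, evalGenerators, algebraMap_algebraMap_eq_coordMap, coordMap,
        structMap]
  · simp [separate_X, evalGenerators]

attribute [local instance] MvPolynomial.algebraMvPolynomial

variable {F j} in
theorem ker_evalGenerators (hF : AbsIrred F) (hd : F.natDegree ≠ 0) :
    RingHom.ker (evalGenerators F j) = Ideal.span {(separate ℚ j (toQ F)).map
      (algebraMap (MvPolynomial {i // i ≠ j} ℚ) (FractionRing _))} := by
  refine ker_eq_span_singleton_algebraMap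
    ((nonZeroDivisors (MvPolynomial {i // i ≠ j} ℚ)).map MvPolynomial.C)
    (φ := (evalGenerators F j).toRingHom) ?_
  obtain ⟨_⟩ : Nonempty (NormalizedGCDMonoid (MvPolynomial (Fin n) ℚ)) := inferInstance
  have hker : RingHom.ker (((evalGenerators F j).toRingHom.comp
      (MvPolynomial.map (algebraMap _ _))).comp (separate ℚ j).toAlgHom.toRingHom) =
      Ideal.span {toQ F} :=
    (congrArg RingHom.ker (evalGenerators_comp_map_comp_separate F j)).trans
      (ker_mk_comp_mapRingHom (hF.isPrimitive_toQ hd))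
  rw [MvPolynomial.algebraMap_def, ← Ideal.map_comap_of_surjective
    (separate ℚ j).toAlgHom.toRingHom (separate ℚ j).surjective (RingHom.ker _), RingHom.comap_ker,
    hker, Ideal.map_span, Set.image_singleton]
  rfl

theorem geometricallyIrreducible_map_separate_toQ {F : (MvPolynomial (Fin n) ℤ)[X]} {j : Fin n}
    (hF : AbsIrred F) (hd : F.natDegree ≠ 0) (hcl : ∀ z, AlgOverCoord j F z → CoordMem j F z) :
    GeometricallyIrreducible ((separate ℚ j (toQ F)).map
      (algebraMap (MvPolynomial {i // i ≠ j} ℚ) (FractionRing (MvPolynomial {i // i ≠ j} ℚ)))) := by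
  have : Fact (Irreducible (toFrac F)) := ⟨hF.irreducible_toFrac hd⟩
  have := isIntegrallyClosedIn_of_coordMem F j hcl
  refine geometricallyIrreducible_of_ker_eq_span_singleton ?_ (evalGenerators F j)
    (ker_evalGenerators hF hd)
  rw [map_ne_zero_iff _ (MvPolynomial.map_injective _ (IsFractionRing.injective _ _)),
    map_ne_zero_iff _ (separate ℚ j).injective]
  exact hF.irreducible_toQ.ne_zero

/-- The embedding of `ℤ[ρ]` in `ℚ(ρ)`. -/
def fractionMap (ρ : Type*) : MvPolynomial ρ ℤ →+* FractionRing (MvPolynomial ρ ℚ) :=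
  (algebraMap (MvPolynomial ρ ℚ) _).comp (MvPolynomial.map (Int.castRingHom ℚ))

theorem fractionMap_injective (ρ : Type*) : Function.Injective (fractionMap ρ) := by
  rw [fractionMap, RingHom.coe_comp]
  exact (IsFractionRing.injective _ _).comp
    (MvPolynomial.map_injective _ (RingHom.injective_int _))

theorem geometricallyIrreducible_map_separate {F : (MvPolynomial (Fin n) ℤ)[X]} {j : Fin n}
    (hF : AbsIrred F) (hd : F.natDegree ≠ 0) (hcl : ∀ z, AlgOverCoord j F z → CoordMem j F z) :
    GeometricallyIrreducible ((separate ℤ j F).map (fractionMap {i // i ≠ j})) := by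
  rw [fractionMap, ← MvPolynomial.map_map, ← separate_map]
  exact geometricallyIrreducible_map_separate_toQ hF hd hcl

end FunctionField

theorem statement19_general {n : ℕ} (hn : 2 ≤ n) (j : Fin n) (D : ℕ) :
    ∃ C C' : ℝ, 0 < C ∧ 0 < C' ∧ ∀ F : (MvPolynomial (Fin n) ℤ)[X],
      AbsIrred F → F.natDegree ≠ 0 → 3 ≤ polyNorm F → totalDeg F ≤ D →
      (∀ z : AdjoinRoot (toFrac F), AlgOverCoord j F z → CoordMem j F z) →
      ∃ E : Finset ℕ, (∀ p ∈ E, p.Prime) ∧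
        (E.card : ℝ) ≤ C * Real.log (polyNorm F) / Real.log (Real.log (polyNorm F)) ∧
        ∀ (p : ℕ) [Fact p.Prime], p ∉ E →
          ({x : {i // i ≠ j} → ZMod p | ¬ Irreducible
              ((F.map (MvPolynomial.map (Int.castRingHom (ZMod p)))).map
                (MvPolynomial.aeval fun i ↦ if h : i = j then
                  (MvPolynomial.X i : MvPolynomial (Fin n) (AlgebraicClosure (ZMod p)))
                  else MvPolynomial.C (algebraMap (ZMod p) (AlgebraicClosure (ZMod p))
                    (x ⟨i, h⟩))).toRingHom)}.ncard : ℝ) ≤ C' * (p : ℝ) ^ (n - 2) := by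
  obtain ⟨C, C', hC, hC', h⟩ := exists_finset_ncard_not_geometricallyIrreducible_le
    (Option Unit) {i // i ≠ j} D
  refine ⟨C, C', hC, hC', fun F hF hd hnorm hD hcl ↦ ?_⟩
  obtain ⟨E, hE, hcard, hbad⟩ := h (separate ℤ j F) (polyNorm F) hnorm
    ((totalDegree_separate_le j F).trans hD)
    (fun m ↦ (totalDegree_coeff_separate_le j F m).trans hD)
    (natAbs_coeff_coeff_separate_le j F) _ (fractionMap_injective _)
    (geometricallyIrreducible_map_separate hF hd hcl)
  refine ⟨E, hE, by rwa [mul_div_assoc], fun p hp hpE ↦ ?_⟩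
  have hp0 : (0 : ℝ) < p := mod_cast hp.out.pos
  have hcardρ : Fintype.card {i // i ≠ j} = n - 2 + 1 := by
    rw [Fintype.card_subtype_compl, Fintype.card_fin, Fintype.card_subtype_eq]
    omega
  have hle := hbad p hpE
  rw [hcardρ, pow_succ, ← mul_assoc] at hle
  exact (Nat.cast_le.2 (ncard_not_irreducible_le (Int.castRingHom (ZMod p)) j F)).trans
    (le_of_mul_le_mul_right hle hp0)

theorem statement19 (n : ℕ) (hn : 2 ≤ n) (D : ℕ) :
    ∃ C C' : ℝ, 0 < C ∧ 0 < C' ∧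
      ∀ F : Polynomial (MvPolynomial (Fin n) ℤ),
        AbsIrred F → 2 ≤ F.natDegree → 3 ≤ polyNorm F → totalDeg F = D →
        (∀ z : AdjoinRoot (toFrac F),
          AlgOverCoord (⟨0, by omega⟩ : Fin n) F z →
            CoordMem (⟨0, by omega⟩ : Fin n) F z) →
        ∃ E : Finset ℕ, (∀ p ∈ E, p.Prime) ∧
          (E.card : ℝ) ≤
            C * Real.log (polyNorm F : ℝ) / Real.log (Real.log (polyNorm F : ℝ)) ∧
          ∀ p : ℕ, ∀ hp : p.Prime, p ∉ E →
            haveI : Fact p.Prime := ⟨hp⟩;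
            (Set.ncard {x : {i : Fin n // i ≠ (⟨0, by omega⟩ : Fin n)} → ZMod p |
                ¬ Irreducible
                  ((F.map (MvPolynomial.map (Int.castRingHom (ZMod p)))).map
                    ((MvPolynomial.aeval (R := ZMod p) fun i =>
                      if h : i = (⟨0, by omega⟩ : Fin n) then
                        (MvPolynomial.X i :
                          MvPolynomial (Fin n) (AlgebraicClosure (ZMod p)))
                      else
                        MvPolynomial.C
                          (algebraMap (ZMod p) (AlgebraicClosure (ZMod p))
                            (x ⟨i, h⟩))).toRingHom))} : ℝ)
              ≤ C' * (p : ℝ) ^ (n - 2) := by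
  obtain ⟨C, C', hC, hC', h⟩ := statement19_general hn (⟨0, by omega⟩ : Fin n) D
  exact ⟨C, C', hC, hC', fun F hF hd hnorm hD hcl ↦
    (h F hF (by omega) hnorm hD.le hcl).imp fun E hE ↦ ⟨hE.1, hE.2.1, fun p hp ↦ @hE.2.2 p ⟨hp⟩⟩⟩
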